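/- Let φ be a smooth compactly supported function on ℝ^d and let T > 0. Then there exists a constant C > 0 such that for all t ∈ [0,T] and all x ∈ ℝ^d, |(V_t φ)(x)| + |∂_t (V_t φ)(x)| + |Δ (V_t φ)(x)| + |∇ (V_t φ)(x)|² ≤ C e^{-|x|}. -/

import Mathlib

open MeasureTheory Real Filter Set

noncomputable section

/-- Euclidean space `ℝ^d`. -/
abbrev Euc (d : ℕ) := EuclideanSpace ℝ (Fin d)

/-- The heat semigroup `P_t` with generator `(α/2)Δ`: for `t > 0` it is given by
convolution with the Gaussian kernel of variance `αt`, and `P_0 f = f`. -/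
def heatP (d : ℕ) (α t : ℝ) (f : Euc d → ℝ) (x : Euc d) : ℝ :=
  if t = 0 then f x
  else ∫ y : Euc d, (2 * π * α * t) ^ (-(d : ℝ) / 2) *
    Real.exp (-‖x - y‖ ^ 2 / (2 * α * t)) * f y

/-- The Laplacian of `f : ℝ^d → ℝ`, as the sum of the second partial derivatives in the
coordinate directions. -/
def lap (d : ℕ) (f : Euc d → ℝ) (x : Euc d) : ℝ :=
  ∑ i : Fin d, fderiv ℝ (fun y => fderiv ℝ f y (EuclideanSpace.single i 1)) x
    (EuclideanSpace.single i 1)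

/-- The Cole–Hopf transform `V_t φ = -α ln (P_t e^{-φ/α})`. -/
def coleHopf (d : ℕ) (α t : ℝ) (φ : Euc d → ℝ) (x : Euc d) : ℝ :=
  -α * Real.log (heatP d α t (fun y => Real.exp (-φ y / α)) x)

/-- A tempered measure: a locally finite Borel measure integrating every Schwartz function. -/
def IsTempered {d : ℕ} (μ : Measure (Euc d)) : Prop :=
  IsLocallyFiniteMeasure μ ∧ ∀ φ : SchwartzMap (Euc d) ℝ, Integrable (fun x => φ x) μ

/-- The Gaussian measure on `ℝ^d` with mean `m` and covariance `t • Id`, defined through its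
density with respect to Lebesgue measure. -/
def gaussE (d : ℕ) (m : Euc d) (t : ℝ) : Measure (Euc d) :=
  volume.withDensity fun x =>
    ENNReal.ofReal ((2 * π * t) ^ (-(d : ℝ) / 2) * Real.exp (-‖x - m‖ ^ 2 / (2 * t)))

/-- The unit cube `[0,1]^d`. -/
def unitCube (d : ℕ) : Set (Euc d) := {x | ∀ i, x i ∈ Set.Icc (0 : ℝ) 1}

/-- First-order partial derivative in direction `i`. -/
def pderivI {d : ℕ} (i : Fin d) (f : Euc d → ℝ) (x : Euc d) : ℝ :=
  fderiv ℝ f x (EuclideanSpace.single i 1)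

/-- Iterated partial derivative in direction `i`. -/
def pderivIter {d : ℕ} (i : Fin d) : ℕ → (Euc d → ℝ) → Euc d → ℝ
  | 0, f => f
  | n + 1, f => pderivI i (pderivIter i n f)

/-- The partial derivative `D^β` for a multi-index `β`. -/
def Dmulti {d : ℕ} (β : Fin d → ℕ) (f : Euc d → ℝ) : Euc d → ℝ :=
  (List.finRange d).foldr (fun i g => pderivIter i (β i) g) f

/-!
With `Z` a standard Gaussian vector, `P_t f (x) = E f(x + √(αt) Z)`. Derivatives in `x` pass inside
the expectation, and Stein's Gaussian integration by parts turns `∂_s E f(x + sZ) = E Df(x + sZ) Z`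
into `s E Δf(x + sZ)`, which is the heat equation `∂_t P_t f = (α/2) P_t Δf`, valid down to `t = 0`.
Since `|x| ≤ |x + sZ| + s|Z|`, an exponential decay bound on `f`, `Df` or `D²f` is preserved up to
the factor `E exp(s|Z|) < ∞`, uniformly for `t ∈ [0, T]`.

If `φ` decays exponentially together with its first two derivatives, then `g = e^{-φ/α}` converges
to `1` in the same sense and takes values in a compact interval `[a, b] ⊂ (0, ∞)`. Hence so does
`P_t g`, and composing with `-α log`, which is smooth on `[a, b]` and vanishes at `1`, gives the
spatial bounds. The time derivative is `∂_t V_t φ = -(α²/2) P_t Δg / P_t g`, where `P_t g ≥ a`.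
-/

open ProbabilityTheory Laplacian InnerProductSpace

section StdGaussian

/-- Exponential moments come from Fernique's theorem, by completing the square. -/
lemma integrable_exp_mul_norm_of_isGaussian {E : Type*} [NormedAddCommGroup E] [NormedSpace ℝ E]
    [MeasurableSpace E] [BorelSpace E] [SecondCountableTopology E] [CompleteSpace E]
    (μ : Measure E) [IsGaussian μ] (S : ℝ) : Integrable (fun z => exp (S * ‖z‖)) μ := by
  obtain ⟨c, hc, hexp_sq⟩ := IsGaussian.exists_integrable_exp_sq μ
  refine (hexp_sq.const_mul (exp (S ^ 2 / (4 * c)))).mono' (by fun_prop) (.of_forall fun z => ?_)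
  have complete_square : S * ‖z‖ + c * (‖z‖ - S / (2 * c)) ^ 2 = S ^ 2 / (4 * c) + c * ‖z‖ ^ 2 := by
    field
  rw [norm_of_nonneg (exp_nonneg _), ← exp_add, exp_le_exp, ← complete_square]
  exact le_add_of_nonneg_right (by positivity)

variable {E F : Type*} [NormedAddCommGroup E] [InnerProductSpace ℝ E]

/-- The Lebesgue density of the standard Gaussian measure on `E`. -/
def stdGaussianPDF (z : E) : ℝ :=
  (2 * π) ^ (-(Module.finrank ℝ E : ℝ) / 2) * exp (-‖z‖ ^ 2 / 2)

lemma stdGaussianPDF_nonneg (z : E) : 0 ≤ stdGaussianPDF z := by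
  unfold stdGaussianPDF
  positivity

lemma continuous_stdGaussianPDF : Continuous (stdGaussianPDF : E → ℝ) := by
  unfold stdGaussianPDF
  fun_prop

lemma hasFDerivAt_stdGaussianPDF (z : E) :
    HasFDerivAt stdGaussianPDF (-stdGaussianPDF z • innerSL ℝ z) z := by
  have hexponent : HasFDerivAt (fun z : E => -‖z‖ ^ 2 / 2) (-innerSL ℝ z) z := by
    convert! (hasStrictFDerivAt_norm_sq z).hasFDerivAt.const_mul (-1 / 2 : ℝ) using 1
    · ext
      ring
    · ext
      simp [div_eq_mul_inv]
  convert! hexponent.exp.const_mul ((2 * π) ^ (-(Module.finrank ℝ E : ℝ) / 2)) using 1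
  ext
  simp only [stdGaussianPDF, smul_apply, neg_apply, smul_eq_mul]
  ring

variable [FiniteDimensional ℝ E] [MeasurableSpace E] [BorelSpace E]
  [NormedAddCommGroup F] [NormedSpace ℝ F]

lemma integrable_stdGaussianPDF : Integrable (stdGaussianPDF : E → ℝ) := by
  have integrable_cexp := GaussianFourier.integrable_cexp_neg_mul_sq_norm_add (V := E)
    (b := 1 / 2) (by norm_num) 0 0
  refine (integrable_cexp.norm.congr (.of_forall fun z => ?_)).const_mul _
  simp [Complex.norm_exp, ← Complex.ofReal_pow, div_eq_inv_mul]

lemma stdGaussian_eq_withDensity :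
    stdGaussian E = volume.withDensity fun z => ENNReal.ofReal (stdGaussianPDF z) := by
  have : IsFiniteMeasure (volume.withDensity fun z : E => ENNReal.ofReal (stdGaussianPDF z)) :=
    isFiniteMeasure_withDensity_ofReal integrable_stdGaussianPDF.2
  refine Measure.ext_of_charFun (funext fun ξ => ?_)
  rw [charFun_stdGaussian, charFun_apply, integral_withDensity_eq_integral_toReal_smul
    continuous_stdGaussianPDF.measurable.ennreal_ofReal (by simp)]
  simp only [ENNReal.toReal_ofReal (stdGaussianPDF_nonneg _)]
  have fourier := GaussianFourier.integral_cexp_neg_mul_sq_norm_add (V := E)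
    (b := 1 / 2) (by norm_num) Complex.I ξ
  have normalization : ((2 * π : ℝ) : ℂ) ^ (-(Module.finrank ℝ E : ℂ) / 2) *
      ((2 * π : ℝ) : ℂ) ^ ((Module.finrank ℝ E : ℂ) / 2) = 1 := by
    rw [← Complex.cpow_add _ _ (by exact_mod_cast two_pi_pos.ne'), neg_div, neg_add_cancel,
      Complex.cpow_zero]
  calc Complex.exp (-‖ξ‖ ^ 2 / 2)
    _ = ((2 * π : ℝ) : ℂ) ^ (-(Module.finrank ℝ E : ℂ) / 2) *
        ∫ z : E, Complex.exp (-(1 / 2) * ‖z‖ ^ 2 + Complex.I * inner ℝ ξ z) := by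
      rw [fourier, Complex.I_sq, show (π : ℂ) / (1 / 2) = (2 * π : ℝ) by push_cast; ring,
        ← mul_assoc, normalization, one_mul]
      congr 1
      ring
    _ = ∫ z : E, stdGaussianPDF z • Complex.exp (inner ℝ z ξ * Complex.I) := by
      rw [← integral_const_mul]
      congr 1 with z
      have pdf_coe : (stdGaussianPDF z : ℂ) = ((2 * π : ℝ) : ℂ) ^ (-(Module.finrank ℝ E : ℂ) / 2) *
          Complex.exp (-‖z‖ ^ 2 / 2) := by
        rw [stdGaussianPDF, Complex.ofReal_mul ((2 * π) ^ _), Complex.ofReal_cpow two_pi_pos.le]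
        push_cast
        rfl
      rw [Complex.real_smul, pdf_coe, mul_assoc, ← Complex.exp_add, real_inner_comm]
      ring_nf

lemma integral_stdGaussian (f : E → F) :
    ∫ z, f z ∂stdGaussian E = ∫ z, stdGaussianPDF z • f z := by
  rw [stdGaussian_eq_withDensity, integral_withDensity_eq_integral_toReal_smul
    continuous_stdGaussianPDF.measurable.ennreal_ofReal (by simp)]
  simp only [ENNReal.toReal_ofReal (stdGaussianPDF_nonneg _)]

lemma integrable_stdGaussian_iff {f : E → F} :
    Integrable f (stdGaussian E) ↔ Integrable fun z => stdGaussianPDF z • f z := by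
  rw [stdGaussian_eq_withDensity, integrable_withDensity_iff_integrable_smul'
    continuous_stdGaussianPDF.measurable.ennreal_ofReal (by simp)]
  simp only [ENNReal.toReal_ofReal (stdGaussianPDF_nonneg _)]

lemma integral_inner_smul_stdGaussian {f : E → F} (hf : Differentiable ℝ f)
    (v : E) (hf_int : Integrable f (stdGaussian E))
    (hf_inner_int : Integrable (fun z => inner ℝ z v • f z) (stdGaussian E))
    (hf_fderiv_int : Integrable (fun z => fderiv ℝ f z v) (stdGaussian E)) :
    ∫ z, inner ℝ z v • f z ∂stdGaussian E = ∫ z, fderiv ℝ f z v ∂stdGaussian E := by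
  rw [integrable_stdGaussian_iff] at *
  rw [integral_stdGaussian, integral_stdGaussian]
  have pdf_deriv (z : E) : fderiv ℝ stdGaussianPDF z v = -(stdGaussianPDF z * inner ℝ z v) := by
    simp [(hasFDerivAt_stdGaussianPDF z).fderiv]
  rw [integral_smul_fderiv_eq_neg_fderiv_smul_of_integrable ?_ hf_fderiv_int hf_int
    (fun z _ => (hasFDerivAt_stdGaussianPDF z).differentiableAt) fun z _ => hf z]
  · simp [pdf_deriv, mul_smul, integral_neg]
  · simpa [pdf_deriv, mul_smul] using hf_inner_int

end StdGaussian

section GradientLaplacian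

variable {E F : Type*} [NormedAddCommGroup E] [InnerProductSpace ℝ E]

lemma norm_gradient [CompleteSpace E] (f : E → ℝ) (x : E) : ‖gradient f x‖ = ‖fderiv ℝ f x‖ :=
  LinearIsometryEquiv.norm_map (toDual ℝ E).symm (fderiv ℝ f x)

variable [FiniteDimensional ℝ E] [NormedAddCommGroup F] [NormedSpace ℝ F]

lemma laplacian_eq_sum_fderiv_fderiv {ι : Type*} [Fintype ι] (b : OrthonormalBasis ι ℝ E)
    (f : E → F) (x : E) : Δ f x = ∑ i, fderiv ℝ (fderiv ℝ f) x (b i) (b i) := by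
  simp [laplacian_eq_iteratedFDeriv_orthonormalBasis f b, iteratedFDeriv_two_apply]

lemma norm_laplacian_le (f : E → F) (x : E) :
    ‖Δ f x‖ ≤ Module.finrank ℝ E * ‖fderiv ℝ (fderiv ℝ f) x‖ := by
  rw [laplacian_eq_sum_fderiv_fderiv (stdOrthonormalBasis ℝ E)]
  refine (norm_sum_le_of_le (n := fun _ => ‖fderiv ℝ (fderiv ℝ f) x‖) _ fun i _ => ?_).trans_eq
    (by simp)
  simpa using (fderiv ℝ (fderiv ℝ f) x).le_opNorm₂ (stdOrthonormalBasis ℝ E i)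
    (stdOrthonormalBasis ℝ E i)

lemma continuous_laplacian {f : E → F} (hf : ContDiff ℝ 2 f) : Continuous (Δ f) := by
  have : Continuous (fderiv ℝ (fderiv ℝ f)) :=
    (hf.fderiv_right le_rfl).continuous_fderiv one_ne_zero
  simp_rw [funext (laplacian_eq_sum_fderiv_fderiv (stdOrthonormalBasis ℝ E) f)]
  fun_prop

end GradientLaplacian

section GaussianAverage

variable {E F : Type*} [NormedAddCommGroup E] [InnerProductSpace ℝ E] [FiniteDimensional ℝ E]
  [MeasurableSpace E] [BorelSpace E] [NormedAddCommGroup F] {f : E → F} {C C₁ C₂ : ℝ}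

lemma integrable_comp_add_smul_stdGaussian (hf : Continuous f) (hC : ∀ y, ‖f y‖ ≤ C) (s : ℝ)
    (x : E) : Integrable (fun z => f (x + s • z)) (stdGaussian E) :=
  .of_bound (by fun_prop) C (.of_forall fun _ => hC _)

variable [NormedSpace ℝ F]

lemma integrable_inner_smul_stdGaussian (hf : Continuous f) (hC : ∀ y, ‖f y‖ ≤ C) (v : E) :
    Integrable (fun z => inner ℝ z v • f z) (stdGaussian E) := by
  refine ((IsGaussian.integrable_id (μ := stdGaussian E)).norm.mul_const (‖v‖ * C)).mono'
    (by fun_prop) (.of_forall fun z => ?_)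
  rw [norm_smul, id, ← mul_assoc]
  gcongr
  · exact norm_inner_le_norm z v
  · exact hC z

/-- The mean of `f` over the Gaussian law on `E` with mean `x` and covariance `s² • Id`. With
`s = √(α t)` this is the heat semigroup; the standard deviation is used as the parameter because
the integrand is then smooth in it, down to `s = 0`. -/
def gaussianAverage (f : E → F) (s : ℝ) (x : E) : F :=
  ∫ z, f (x + s • z) ∂stdGaussian E

lemma gaussianAverage_eq_integral_kernel {s : ℝ} (hs : 0 < s) (f : E → F) (x : E) :
    gaussianAverage f s x = ∫ y, ((2 * π * s ^ 2) ^ (-(Module.finrank ℝ E : ℝ) / 2) *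
      exp (-‖x - y‖ ^ 2 / (2 * s ^ 2))) • f y := by
  set n := Module.finrank ℝ E
  set kernel : E → ℝ := fun y =>
    (2 * π * s ^ 2) ^ (-(n : ℝ) / 2) * exp (-‖x - y‖ ^ 2 / (2 * s ^ 2))
  have normalization : s ^ n * (2 * π * s ^ 2) ^ (-(n : ℝ) / 2) = (2 * π) ^ (-(n : ℝ) / 2) := by
    rw [mul_rpow two_pi_pos.le (sq_nonneg s), ← rpow_natCast s 2, ← rpow_mul hs.le,
      ← rpow_natCast s n, mul_left_comm, ← rpow_add hs,
      show (n : ℝ) + (2 : ℕ) * (-(n : ℝ) / 2) = 0 by push_cast; ring, rpow_zero, mul_one]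
  have pdf_eq (z : E) : stdGaussianPDF z = s ^ n * kernel (x + s • z) := by
    rw [← mul_assoc, normalization, stdGaussianPDF, sub_add_cancel_left, norm_neg, norm_smul,
      mul_pow, norm_eq_abs, sq_abs]
    field_simp
    rfl
  calc gaussianAverage f s x
    _ = ∫ z, stdGaussianPDF z • f (x + s • z) := integral_stdGaussian _
    _ = s ^ n • ∫ z, kernel (x + s • z) • f (x + s • z) := by
      simp_rw [pdf_eq, mul_smul, integral_smul]
    _ = ∫ y, kernel (x + y) • f (x + y) := by
      rw [Measure.integral_comp_smul_of_nonneg volume (fun y => kernel (x + y) • f (x + y)) s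
        (hR := hs.le), smul_inv_smul₀ (pow_pos hs n).ne']
    _ = ∫ y, kernel y • f y := integral_add_left_eq_self (fun y => kernel y • f y) x

lemma gaussianAverage_mem_Icc {g : E → ℝ} {a b : ℝ} (hg : Continuous g)
    (hab : ∀ y, g y ∈ Icc a b) (s : ℝ) (x : E) : gaussianAverage g s x ∈ Icc a b :=
  (convex_Icc a b).integral_mem isClosed_Icc (.of_forall fun _ => hab _) <|
    integrable_comp_add_smul_stdGaussian hg
      (fun y => abs_le_max_abs_abs (hab y).1 (hab y).2) s x

lemma continuous_gaussianAverage_left (hf : Continuous f) (hC : ∀ y, ‖f y‖ ≤ C) (x : E) :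
    Continuous fun s => gaussianAverage f s x :=
  continuous_of_dominated (fun _ => by fun_prop) (fun _ => .of_forall fun _ => hC _)
    (integrable_const C) (.of_forall fun _ => by fun_prop)

lemma continuous_gaussianAverage_right (hf : Continuous f) (hC : ∀ y, ‖f y‖ ≤ C) (s : ℝ) :
    Continuous (gaussianAverage f s) :=
  continuous_of_dominated (fun _ => by fun_prop) (fun _ => .of_forall fun _ => hC _)
    (integrable_const C) (.of_forall fun _ => by fun_prop)

lemma hasFDerivAt_gaussianAverage (hf : ContDiff ℝ 1 f) (hC : ∀ y, ‖f y‖ ≤ C)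
    (hC₁ : ∀ y, ‖fderiv ℝ f y‖ ≤ C₁) (s : ℝ) (x : E) :
    HasFDerivAt (gaussianAverage f s) (gaussianAverage (fderiv ℝ f) s x) x := by
  have hDf : Continuous (fderiv ℝ f) := hf.continuous_fderiv one_ne_zero
  exact hasFDerivAt_integral_of_dominated_of_fderiv_le (𝕜 := ℝ)
    (F := fun x z => f (x + s • z)) (F' := fun x z => fderiv ℝ f (x + s • z)) univ_mem
    (.of_forall fun x => (integrable_comp_add_smul_stdGaussian hf.continuous hC s x).1)
    (integrable_comp_add_smul_stdGaussian hf.continuous hC s x)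
    (integrable_comp_add_smul_stdGaussian hDf hC₁ s x).1
    (.of_forall fun _ _ _ => hC₁ _) (integrable_const C₁)
    (.of_forall fun z x _ => (hasFDerivAt_comp_add_right (s • z)).2
      (hf.differentiable one_ne_zero (x + s • z)).hasFDerivAt)

lemma fderiv_gaussianAverage (hf : ContDiff ℝ 1 f) (hC : ∀ y, ‖f y‖ ≤ C)
    (hC₁ : ∀ y, ‖fderiv ℝ f y‖ ≤ C₁) (s : ℝ) :
    fderiv ℝ (gaussianAverage f s) = gaussianAverage (fderiv ℝ f) s :=
  funext fun x => (hasFDerivAt_gaussianAverage hf hC hC₁ s x).fderiv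

lemma contDiff_one_gaussianAverage (hf : ContDiff ℝ 1 f) (hC : ∀ y, ‖f y‖ ≤ C)
    (hC₁ : ∀ y, ‖fderiv ℝ f y‖ ≤ C₁) (s : ℝ) : ContDiff ℝ 1 (gaussianAverage f s) := by
  rw [contDiff_one_iff_fderiv, fderiv_gaussianAverage hf hC hC₁]
  exact ⟨fun x => (hasFDerivAt_gaussianAverage hf hC hC₁ s x).differentiableAt,
    continuous_gaussianAverage_right (hf.continuous_fderiv one_ne_zero) hC₁ s⟩

lemma contDiff_two_gaussianAverage (hf : ContDiff ℝ 2 f) (hC : ∀ y, ‖f y‖ ≤ C)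
    (hC₁ : ∀ y, ‖fderiv ℝ f y‖ ≤ C₁) (hC₂ : ∀ y, ‖fderiv ℝ (fderiv ℝ f) y‖ ≤ C₂) (s : ℝ) :
    ContDiff ℝ 2 (gaussianAverage f s) := by
  have hf_one : ContDiff ℝ 1 f := hf.of_le one_le_two
  rw [show (2 : WithTop ℕ∞) = 1 + 1 from one_add_one_eq_two.symm, contDiff_succ_iff_fderiv,
    fderiv_gaussianAverage hf_one hC hC₁]
  exact ⟨fun x => (hasFDerivAt_gaussianAverage hf_one hC hC₁ s x).differentiableAt, by simp,
    contDiff_one_gaussianAverage (hf.fderiv_right le_rfl) hC₁ hC₂ s⟩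

/-- The shift by `s • z` costs a factor `exp (|s| ‖z‖)`, which is Gaussian integrable. -/
lemma norm_gaussianAverage_le_mul_exp_neg_norm (hf : ∀ y, ‖f y‖ ≤ C * exp (-‖y‖)) {s S : ℝ}
    (hs : |s| ≤ S) (x : E) :
    ‖gaussianAverage f s x‖ ≤ C * (∫ z, exp (S * ‖z‖) ∂stdGaussian E) * exp (-‖x‖) := by
  have hC : 0 ≤ C := nonneg_of_mul_nonneg_left ((norm_nonneg _).trans (hf 0)) (exp_pos _)
  have exp_shift (z : E) : exp (-‖x + s • z‖) ≤ exp (S * ‖z‖) * exp (-‖x‖) := by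
    rw [← exp_add, exp_le_exp]
    have : ‖x‖ ≤ ‖x + s • z‖ + |s| * ‖z‖ := by
      simpa [norm_smul] using norm_sub_le (x + s • z) (s • z)
    nlinarith [mul_le_mul_of_nonneg_right hs (norm_nonneg z)]
  rw [mul_assoc, ← integral_mul_const, ← integral_const_mul]
  refine norm_integral_le_of_norm_le (((integrable_exp_mul_norm_of_isGaussian _ S).mul_const
    _).const_mul C) (.of_forall fun z => (hf _).trans ?_)
  gcongr
  exact exp_shift z

lemma integral_inner_smul_fderiv_stdGaussian (hf : ContDiff ℝ 2 f)
    (hC₁ : ∀ y, ‖fderiv ℝ f y‖ ≤ C₁) (hC₂ : ∀ y, ‖fderiv ℝ (fderiv ℝ f) y‖ ≤ C₂) (s : ℝ)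
    (x v : E) :
    ∫ z, inner ℝ z v • fderiv ℝ f (x + s • z) v ∂stdGaussian E =
      s • gaussianAverage (fun y => fderiv ℝ (fderiv ℝ f) y v v) s x := by
  have hDf : ContDiff ℝ 1 (fderiv ℝ f) := hf.fderiv_right le_rfl
  have hDf_cont : Continuous (fderiv ℝ f) := hDf.continuous
  have : Continuous (fderiv ℝ (fderiv ℝ f)) := hDf.continuous_fderiv one_ne_zero
  have hderiv (z : E) : HasFDerivAt (fun z => fderiv ℝ f (x + s • z) v)
      (s • (fderiv ℝ (fderiv ℝ f) (x + s • z)).flip v) z := by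
    have hDf_at := (hDf.differentiable one_ne_zero (x + s • z)).hasFDerivAt
    convert! (hDf_at.comp z (((hasFDerivAt_id z).const_smul s).const_add x)).clm_apply
      (hasFDerivAt_const v z) using 1
    ext
    simp
  have hDf_int :=
    (integrable_comp_add_smul_stdGaussian hDf_cont hC₁ s x).apply_continuousLinearMap v
  have hD2f_int := integrable_comp_add_smul_stdGaussian (f := fun y => fderiv ℝ (fderiv ℝ f) y v v)
    (by fun_prop) (fun y => (fderiv ℝ (fderiv ℝ f) y).le_of_opNorm₂_le_of_le
      (hC₂ y) le_rfl le_rfl) s x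
  rw [integral_inner_smul_stdGaussian (fun z => (hderiv z).differentiableAt) v hDf_int ?_ ?_,
    gaussianAverage, ← integral_smul]
  · simp [(hderiv _).fderiv]
  · exact integrable_inner_smul_stdGaussian (by fun_prop)
      (fun z => (fderiv ℝ f _).le_of_opNorm_le (hC₁ _) v) v
  · simpa [(hderiv _).fderiv] using hD2f_int.fun_smul s

lemma integral_fderiv_self_stdGaussian (hf : ContDiff ℝ 2 f)
    (hC₁ : ∀ y, ‖fderiv ℝ f y‖ ≤ C₁) (hC₂ : ∀ y, ‖fderiv ℝ (fderiv ℝ f) y‖ ≤ C₂) (s : ℝ) (x : E) :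
    ∫ z, fderiv ℝ f (x + s • z) z ∂stdGaussian E = s • gaussianAverage (Δ f) s x := by
  let b := stdOrthonormalBasis ℝ E
  have : Continuous (fderiv ℝ f) := hf.continuous_fderiv two_ne_zero
  have : Continuous (fderiv ℝ (fderiv ℝ f)) :=
    (hf.fderiv_right le_rfl).continuous_fderiv one_ne_zero
  calc ∫ z, fderiv ℝ f (x + s • z) z ∂stdGaussian E
    _ = ∫ z, ∑ i, inner ℝ z (b i) • fderiv ℝ f (x + s • z) (b i) ∂stdGaussian E := by
      congr 1 with z
      conv_lhs => enter [2]; rw [← b.sum_repr' z]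
      simp [real_inner_comm]
    _ = ∑ i, ∫ z, inner ℝ z (b i) • fderiv ℝ f (x + s • z) (b i) ∂stdGaussian E :=
      integral_finsetSum _ fun i _ => integrable_inner_smul_stdGaussian (by fun_prop)
        (fun z => (fderiv ℝ f _).le_of_opNorm_le (hC₁ _) (b i)) (b i)
    _ = s • ∑ i, gaussianAverage (fun y => fderiv ℝ (fderiv ℝ f) y (b i) (b i)) s x := by
      simp_rw [integral_inner_smul_fderiv_stdGaussian hf hC₁ hC₂, Finset.smul_sum]
    _ = s • gaussianAverage (Δ f) s x := by
      simp_rw [gaussianAverage, laplacian_eq_sum_fderiv_fderiv b]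
      rw [integral_finsetSum _ fun i _ => integrable_comp_add_smul_stdGaussian
        (f := fun y => fderiv ℝ (fderiv ℝ f) y (b i) (b i)) (by fun_prop)
        (fun y => (fderiv ℝ (fderiv ℝ f) y).le_of_opNorm₂_le_of_le (hC₂ y) le_rfl le_rfl) s x]

lemma hasDerivAt_gaussianAverage (hf : ContDiff ℝ 2 f) (hC : ∀ y, ‖f y‖ ≤ C)
    (hC₁ : ∀ y, ‖fderiv ℝ f y‖ ≤ C₁) (hC₂ : ∀ y, ‖fderiv ℝ (fderiv ℝ f) y‖ ≤ C₂) (s : ℝ) (x : E) :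
    HasDerivAt (fun s => gaussianAverage f s x) (s • gaussianAverage (Δ f) s x) s := by
  have : Continuous (fderiv ℝ f) := hf.continuous_fderiv two_ne_zero
  have hderiv (s : ℝ) (z : E) :
      HasDerivAt (fun s : ℝ => f (x + s • z)) (fderiv ℝ f (x + s • z) z) s := by
    simpa [Function.comp_def] using (hf.differentiable two_ne_zero
      (x + s • z)).hasFDerivAt.comp_hasDerivAt s (((hasDerivAt_id s).smul_const z).const_add x)
  rw [← integral_fderiv_self_stdGaussian hf hC₁ hC₂]
  exact (hasDerivAt_integral_of_dominated_loc_of_deriv_le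
    (F := fun s z => f (x + s • z)) (F' := fun s z => fderiv ℝ f (x + s • z) z) univ_mem
    (.of_forall fun s => (integrable_comp_add_smul_stdGaussian hf.continuous hC s x).1)
    (integrable_comp_add_smul_stdGaussian hf.continuous hC s x) (by fun_prop)
    (.of_forall fun z s _ => (fderiv ℝ f (x + s • z)).le_of_opNorm_le (hC₁ _) z)
    ((IsGaussian.integrable_id (μ := stdGaussian E)).norm.const_mul C₁)
    (.of_forall fun z s _ => hderiv s z)).2

/-- At `r = 0` the one-sided derivative is the limit of the derivatives at `r > 0`. -/
lemma hasDerivWithinAt_gaussianAverage_sqrt (hf : ContDiff ℝ 2 f) (hC : ∀ y, ‖f y‖ ≤ C)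
    (hC₁ : ∀ y, ‖fderiv ℝ f y‖ ≤ C₁) (hC₂ : ∀ y, ‖fderiv ℝ (fderiv ℝ f) y‖ ≤ C₂) {r : ℝ}
    (hr : 0 ≤ r) (x : E) :
    HasDerivWithinAt (fun r => gaussianAverage f √r x)
      ((1 / 2 : ℝ) • gaussianAverage (Δ f) √r x) (Ici 0) r := by
  have deriv_of_pos {r : ℝ} (hr : 0 < r) : HasDerivAt (fun r => gaussianAverage f √r x)
      ((1 / 2 : ℝ) • gaussianAverage (Δ f) √r x) r := by
    convert! (hasDerivAt_gaussianAverage hf hC hC₁ hC₂ √r x).scomp r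
      (hasDerivAt_sqrt hr.ne') using 1
    rw [smul_smul]
    congr 1
    field [(sqrt_pos.2 hr).ne']
  rcases hr.eq_or_lt with rfl | hr
  · have laplacian_bounded (y : E) : ‖Δ f y‖ ≤ Module.finrank ℝ E * C₂ :=
      (norm_laplacian_le f y).trans (by gcongr; exact hC₂ y)
    have average_cont := (continuous_gaussianAverage_left hf.continuous hC x).comp continuous_sqrt
    have limit_cont := ((continuous_gaussianAverage_left (continuous_laplacian hf) laplacian_bounded
      x).comp continuous_sqrt).const_smul (1 / 2 : ℝ)
    refine hasDerivWithinAt_Ici_of_tendsto_deriv (s := Ioi 0)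
      (fun r hr => (deriv_of_pos hr).differentiableAt.differentiableWithinAt)
      average_cont.continuousWithinAt self_mem_nhdsWithin ?_
    refine ((limit_cont.tendsto 0).mono_left nhdsWithin_le_nhds).congr' ?_
    filter_upwards [self_mem_nhdsWithin] with r hr using (deriv_of_pos hr).deriv.symm
  · exact (deriv_of_pos hr).hasDerivWithinAt

variable [CompleteSpace F]

lemma gaussianAverage_zero (f : E → F) (x : E) : gaussianAverage f 0 x = f x := by
  simp [gaussianAverage]

lemma gaussianAverage_sub_const (hf : Continuous f) (hC : ∀ y, ‖f y‖ ≤ C) (c : F) (s : ℝ) (x : E) :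
    gaussianAverage (fun y => f y - c) s x = gaussianAverage f s x - c := by
  simp [gaussianAverage, integral_sub (integrable_comp_add_smul_stdGaussian hf hC s x)]

end GaussianAverage

section ExpAsymptotic

variable {E F G : Type*} [NormedAddCommGroup E] [NormedAddCommGroup F]

lemma exists_norm_le_mul_exp_neg_norm_of_hasCompactSupport {f : E → F} (hf : Continuous f)
    (hsupp : HasCompactSupport f) : ∃ C, ∀ x, ‖f x‖ ≤ C * exp (-‖x‖) := by
  obtain ⟨C, hC⟩ := (hsupp.norm.mul_left (f := fun x => exp ‖x‖)).exists_bound_of_continuous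
    (by fun_prop)
  refine ⟨C, fun x => ?_⟩
  rw [exp_neg, ← div_eq_mul_inv, le_div_iff₀' (exp_pos _)]
  simpa using hC x

variable [NormedSpace ℝ E] [NormedSpace ℝ F] [NormedAddCommGroup G] [NormedSpace ℝ G]

lemma norm_iteratedFDeriv_two (f : E → F) (x : E) :
    ‖iteratedFDeriv ℝ 2 f x‖ = ‖fderiv ℝ (fderiv ℝ f) x‖ := by
  rw [← norm_iteratedFDeriv_fderiv, norm_iteratedFDeriv_one]

/-- Faà di Bruno's bound, which asks for `‖Dᵏu‖ ≤ Dᵏ`, is applied with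
`D = max ‖Du‖ √‖D²u‖`. -/
lemma norm_fderiv_fderiv_comp_le {h : F → G} {u : E → F} {Ω : Set F} (hΩ : IsOpen Ω)
    (hh : ContDiffOn ℝ 2 h Ω) (hu : ContDiff ℝ 2 u) (hmaps : ∀ x, u x ∈ Ω) (x : E) {M : ℝ}
    (hM : ∀ k ≤ 2, ‖iteratedFDeriv ℝ k h (u x)‖ ≤ M) :
    ‖fderiv ℝ (fderiv ℝ (h ∘ u)) x‖ ≤
      2 * M * (‖fderiv ℝ u x‖ ^ 2 + ‖fderiv ℝ (fderiv ℝ u) x‖) := by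
  set D := max ‖fderiv ℝ u x‖ √‖fderiv ℝ (fderiv ℝ u) x‖
  have hM_nonneg : 0 ≤ M := (norm_nonneg _).trans (hM 0 zero_le_two)
  have hD2u : 0 ≤ ‖fderiv ℝ (fderiv ℝ u) x‖ := norm_nonneg (fderiv ℝ (fderiv ℝ u) x)
  have hD_sq : D ^ 2 ≤ ‖fderiv ℝ u x‖ ^ 2 + ‖fderiv ℝ (fderiv ℝ u) x‖ := by
    rcases max_choice ‖fderiv ℝ u x‖ √‖fderiv ℝ (fderiv ℝ u) x‖ with hD | hD
    · exact (congrArg (· ^ 2) hD).trans_le (le_add_of_nonneg_right hD2u)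
    · exact (congrArg (· ^ 2) hD).trans_le
        ((sq_sqrt hD2u).trans_le (le_add_of_nonneg_left (sq_nonneg _)))
  have hu_le (k : ℕ) (hk : 1 ≤ k) (hk' : k ≤ 2) : ‖iteratedFDeriv ℝ k u x‖ ≤ D ^ k := by
    interval_cases k
    · simp [D]
    · rw [norm_iteratedFDeriv_two]
      exact (sq_sqrt hD2u).symm.trans_le (pow_le_pow_left₀ (sqrt_nonneg _) (le_max_right _ _) 2)
  have faa_di_bruno := norm_iteratedFDerivWithin_comp_le hh hu.contDiffOn (n := 2) le_rfl
    hΩ.uniqueDiffOn uniqueDiffOn_univ (fun x _ => hmaps x) (mem_univ x) (C := M) (D := D)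
    (fun k hk => by simpa [iteratedFDerivWithin_of_isOpen k hΩ (hmaps x)] using hM k hk)
    (fun k hk hk' => by simpa only [iteratedFDerivWithin_univ] using hu_le k hk hk')
  rw [iteratedFDerivWithin_univ, norm_iteratedFDeriv_two] at faa_di_bruno
  exact faa_di_bruno.trans (by push_cast [Nat.factorial]; gcongr)

lemma exists_norm_iteratedFDeriv_le {h : F → G} {Ω K : Set F} (hΩ : IsOpen Ω) {n : ℕ}
    (hh : ContDiffOn ℝ n h Ω) (hK : IsCompact K) (hKΩ : K ⊆ Ω) :
    ∃ M, ∀ y ∈ K, ∀ k ≤ n, ‖iteratedFDeriv ℝ k h y‖ ≤ M := by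
  have hcont (k : ℕ) (hk : k ≤ n) : ContinuousOn (iteratedFDeriv ℝ k h) K :=
    ((hh.continuousOn_iteratedFDerivWithin (by exact_mod_cast hk) hΩ.uniqueDiffOn).congr
      (iteratedFDerivWithin_of_isOpen k hΩ).symm).mono hKΩ
  have : ContinuousOn (fun y => ∑ k ∈ Finset.Iic n, ‖iteratedFDeriv ℝ k h y‖) K :=
    continuousOn_finsetSum _ fun k hk => (hcont k (Finset.mem_Iic.1 hk)).norm
  obtain ⟨M, hM⟩ := hK.bddAbove_image this
  exact ⟨M, fun y hy k hk => (Finset.single_le_sum (f := fun k => ‖iteratedFDeriv ℝ k h y‖)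
    (fun _ _ => norm_nonneg _) (Finset.mem_Iic.2 hk)).trans (hM ⟨y, hy, rfl⟩)⟩

/-- `u` is of class `C²` and tends to `c` exponentially fast: `u - c` and the first two derivatives
of `u` are bounded by `C exp (-‖x‖)`. The constant is explicit so that a family of functions can
be controlled uniformly. -/
structure ExpAsymptoticWith (C : ℝ) (c : F) (u : E → F) : Prop where
  contDiff : ContDiff ℝ 2 u
  norm_sub_le x : ‖u x - c‖ ≤ C * exp (-‖x‖)
  norm_fderiv_le x : ‖fderiv ℝ u x‖ ≤ C * exp (-‖x‖)
  norm_fderiv_fderiv_le x : ‖fderiv ℝ (fderiv ℝ u) x‖ ≤ C * exp (-‖x‖)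

namespace ExpAsymptoticWith

variable {C : ℝ} {c : F} {u : E → F}

lemma nonneg (hu : ExpAsymptoticWith C c u) : 0 ≤ C := by
  simpa using (norm_nonneg _).trans (hu.norm_sub_le 0)

lemma mul_exp_neg_norm_le (hu : ExpAsymptoticWith C c u) (x : E) : C * exp (-‖x‖) ≤ C :=
  mul_le_of_le_one_right hu.nonneg (by simp)

lemma norm_fderiv_sq_le (hu : ExpAsymptoticWith C c u) (x : E) :
    ‖fderiv ℝ u x‖ ^ 2 ≤ C ^ 2 * exp (-‖x‖) := by
  rw [sq, sq, mul_assoc]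
  exact mul_le_mul ((hu.norm_fderiv_le x).trans (hu.mul_exp_neg_norm_le x)) (hu.norm_fderiv_le x)
    (norm_nonneg _) hu.nonneg

lemma norm_le (hu : ExpAsymptoticWith C c u) (x : E) : ‖u x‖ ≤ C + ‖c‖ :=
  (norm_le_norm_sub_add (u x) c).trans
    (by gcongr; exact (hu.norm_sub_le x).trans (hu.mul_exp_neg_norm_le x))

lemma exists_comp {h : F → G} {Ω K : Set F} (hΩ : IsOpen Ω) (hh : ContDiffOn ℝ 2 h Ω)
    (hK : IsCompact K) (hK_convex : Convex ℝ K) (hKΩ : K ⊆ Ω) (hc : c ∈ K) (C : ℝ) :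
    ∃ C', ∀ u : E → F, ExpAsymptoticWith C c u → (∀ x, u x ∈ K) →
      ExpAsymptoticWith C' (h c) (h ∘ u) := by
  obtain ⟨M, hM⟩ := exists_norm_iteratedFDeriv_le hΩ hh hK hKΩ
  have hM_nonneg : 0 ≤ M := (norm_nonneg _).trans (hM c hc 0 zero_le_two)
  have hDh (y : F) (hy : y ∈ K) : ‖fderiv ℝ h y‖ ≤ M := by simpa using hM y hy 1 one_le_two
  have hh_diff (y : F) (hy : y ∈ K) : DifferentiableAt ℝ h y :=
    (hh.contDiffAt (hΩ.mem_nhds (hKΩ hy))).differentiableAt two_ne_zero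
  refine ⟨2 * M * (C ^ 2 + C), fun u hu huK => ?_⟩
  have first_order_le (x : E) : M * (C * exp (-‖x‖)) ≤ 2 * M * (C ^ 2 + C) * exp (-‖x‖) := by
    have := hu.nonneg
    rw [← mul_assoc]
    gcongr
    · linarith
    · exact le_add_of_nonneg_left (sq_nonneg C)
  refine ⟨hh.comp_contDiff hu.contDiff fun x => hKΩ (huK x), fun x => ?_, fun x => ?_, fun x => ?_⟩
  · calc ‖h (u x) - h c‖ ≤ M * ‖u x - c‖ :=
          hK_convex.norm_image_sub_le_of_norm_fderiv_le hh_diff hDh hc (huK x)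
      _ ≤ M * (C * exp (-‖x‖)) := by gcongr; exact hu.norm_sub_le x
      _ ≤ _ := first_order_le x
  · rw [fderiv_comp x (hh_diff _ (huK x)) (hu.contDiff.differentiable two_ne_zero x)]
    calc _ ≤ ‖fderiv ℝ h (u x)‖ * ‖fderiv ℝ u x‖ := ContinuousLinearMap.opNorm_comp_le _ _
      _ ≤ M * (C * exp (-‖x‖)) := by gcongr; exacts [hDh _ (huK x), hu.norm_fderiv_le x]
      _ ≤ _ := first_order_le x
  · calc _ ≤ 2 * M * (‖fderiv ℝ u x‖ ^ 2 + ‖fderiv ℝ (fderiv ℝ u) x‖) :=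
          norm_fderiv_fderiv_comp_le hΩ hh hu.contDiff (fun x => hKΩ (huK x)) x (hM _ (huK x))
      _ ≤ 2 * M * (C ^ 2 * exp (-‖x‖) + C * exp (-‖x‖)) := by
        gcongr
        exacts [hu.norm_fderiv_sq_le x, hu.norm_fderiv_fderiv_le x]
      _ = _ := by ring

lemma exists_of_hasCompactSupport (hu : ContDiff ℝ 2 u) (hsupp : HasCompactSupport u) :
    ∃ C, ExpAsymptoticWith C 0 u := by
  have hDu : ContDiff ℝ 1 (fderiv ℝ u) := hu.fderiv_right le_rfl
  obtain ⟨C₀, hC₀⟩ := exists_norm_le_mul_exp_neg_norm_of_hasCompactSupport hu.continuous hsupp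
  obtain ⟨C₁, hC₁⟩ := exists_norm_le_mul_exp_neg_norm_of_hasCompactSupport hDu.continuous
    (hsupp.fderiv ℝ)
  obtain ⟨C₂, hC₂⟩ := exists_norm_le_mul_exp_neg_norm_of_hasCompactSupport
    (hDu.continuous_fderiv one_ne_zero) ((hsupp.fderiv ℝ).fderiv ℝ)
  refine ⟨max C₀ (max C₁ C₂), hu, fun x => ?_, fun x => ?_, fun x => ?_⟩
  · rw [sub_zero]
    exact (hC₀ x).trans (by gcongr; simp)
  · exact (hC₁ x).trans (by gcongr; simp)
  · exact (hC₂ x).trans (by gcongr; simp)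

lemma exp_neg_div_mem_Icc {φ : E → ℝ} (hφ : ExpAsymptoticWith C 0 φ) {α : ℝ} (hα : 0 < α) (x : E) :
    exp (-φ x / α) ∈ Icc (exp (-(C / α))) (exp (C / α)) := by
  have hφ_le : |φ x| ≤ C := by simpa using hφ.norm_le x
  rw [← neg_div]
  exact ⟨by gcongr; exact (abs_le.1 hφ_le).2, by gcongr; exact neg_le.1 (abs_le.1 hφ_le).1⟩

lemma exists_exp_neg_div {φ : E → ℝ} (hφ : ExpAsymptoticWith C 0 φ) (α : ℝ) :
    ∃ C', ExpAsymptoticWith C' 1 fun x => exp (-φ x / α) := by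
  obtain ⟨C', hC'⟩ := exists_comp (E := E) (h := fun y => exp (-y / α)) isOpen_univ
    (ContDiff.contDiffOn (by fun_prop)) isCompact_Icc (convex_Icc (-C) C) (subset_univ _)
    (c := 0) (by simpa using hφ.nonneg) C
  have := hC' φ hφ fun x => abs_le.1 (by simpa using hφ.norm_le x)
  exact ⟨C', by simpa [Function.comp_def] using this⟩

variable {E : Type*} [NormedAddCommGroup E] [InnerProductSpace ℝ E] [FiniteDimensional ℝ E]
  {u : E → F}

lemma norm_laplacian_le (hu : ExpAsymptoticWith C c u) (x : E) :
    ‖Δ u x‖ ≤ Module.finrank ℝ E * C * exp (-‖x‖) := by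
  rw [mul_assoc]
  exact (_root_.norm_laplacian_le u x).trans (by gcongr; exact hu.norm_fderiv_fderiv_le x)

lemma gaussianAverage [MeasurableSpace E] [BorelSpace E] [CompleteSpace F]
    (hu : ExpAsymptoticWith C c u) {s S : ℝ} (hs : |s| ≤ S) :
    ExpAsymptoticWith (C * ∫ z, exp (S * ‖z‖) ∂stdGaussian E) c (gaussianAverage u s) := by
  have hC₁ x := (hu.norm_fderiv_le x).trans (hu.mul_exp_neg_norm_le x)
  have hC₂ x := (hu.norm_fderiv_fderiv_le x).trans (hu.mul_exp_neg_norm_le x)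
  have hDu := fderiv_gaussianAverage (hu.contDiff.of_le one_le_two) hu.norm_le hC₁ s
  refine ⟨contDiff_two_gaussianAverage hu.contDiff hu.norm_le hC₁ hC₂ s, fun x => ?_, fun x => ?_,
    fun x => ?_⟩
  · rw [← gaussianAverage_sub_const hu.contDiff.continuous hu.norm_le]
    exact norm_gaussianAverage_le_mul_exp_neg_norm hu.norm_sub_le hs x
  · rw [hDu]
    exact norm_gaussianAverage_le_mul_exp_neg_norm hu.norm_fderiv_le hs x
  · rw [hDu, fderiv_gaussianAverage (hu.contDiff.fderiv_right le_rfl) hC₁ hC₂]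
    exact norm_gaussianAverage_le_mul_exp_neg_norm hu.norm_fderiv_fderiv_le hs x

end ExpAsymptoticWith

end ExpAsymptotic

section ColeHopf

variable {d : ℕ} {α t : ℝ}

lemma lap_eq_laplacian {f : Euc d → ℝ} (hf : ContDiff ℝ 2 f) (x : Euc d) : lap d f x = Δ f x := by
  have hDf : Differentiable ℝ (fderiv ℝ f) := (hf.fderiv_right le_rfl).differentiable one_ne_zero
  rw [laplacian_eq_sum_fderiv_fderiv (EuclideanSpace.basisFun (Fin d) ℝ)]
  simp [lap, fderiv_clm_apply (hDf x) (differentiableAt_const _)]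

lemma heatP_eq_gaussianAverage (hα : 0 < α) (ht : 0 ≤ t) (f : Euc d → ℝ) (x : Euc d) :
    heatP d α t f x = gaussianAverage f √(α * t) x := by
  rcases ht.eq_or_lt with rfl | ht
  · simp [heatP, gaussianAverage_zero]
  · have hαt : 0 < α * t := mul_pos hα ht
    rw [heatP, if_neg ht.ne', gaussianAverage_eq_integral_kernel (sqrt_pos.2 hαt), sq_sqrt hαt.le]
    simp [mul_assoc]

lemma coleHopf_eq_gaussianAverage (hα : 0 < α) (ht : 0 ≤ t) (φ : Euc d → ℝ) :
    coleHopf d α t φ =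
      (fun y => -α * log y) ∘ gaussianAverage (fun x => exp (-φ x / α)) √(α * t) :=
  funext fun x => by rw [coleHopf, heatP_eq_gaussianAverage hα ht, Function.comp_apply]

lemma hasDerivWithinAt_coleHopf {φ : Euc d → ℝ} {C : ℝ} (hα : 0 < α)
    (hφ : ExpAsymptoticWith C 0 φ) (ht : 0 ≤ t) (x : Euc d) :
    HasDerivWithinAt (fun s => coleHopf d α s φ x)
      (-(α ^ 2 / 2) * gaussianAverage (Δ fun y => exp (-φ y / α)) √(α * t) x /
        gaussianAverage (fun y => exp (-φ y / α)) √(α * t) x) (Ici 0) t := by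
  obtain ⟨C', hg⟩ := hφ.exists_exp_neg_div α
  have average_pos : 0 < gaussianAverage (fun y => exp (-φ y / α)) √(α * t) x :=
    (exp_pos _).trans_le (gaussianAverage_mem_Icc hg.contDiff.continuous
      (hφ.exp_neg_div_mem_Icc hα) _ x).1
  have heat_equation := (hasDerivWithinAt_gaussianAverage_sqrt hg.contDiff hg.norm_le
    (fun y => (hg.norm_fderiv_le y).trans (hg.mul_exp_neg_norm_le y))
    (fun y => (hg.norm_fderiv_fderiv_le y).trans (hg.mul_exp_neg_norm_le y))
    (mul_nonneg hα.le ht) x).scomp t ((hasDerivWithinAt_id t _).const_mul α)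
    (fun s hs => mul_nonneg hα.le hs)
  refine ((heat_equation.log average_pos.ne').const_mul (-α)).congr_deriv ?_ |>.congr
    (fun s hs => congrFun (coleHopf_eq_gaussianAverage hα hs φ) x)
    (congrFun (coleHopf_eq_gaussianAverage hα ht φ) x)
  simp
  ring

lemma abs_sqrt_mul_le {T : ℝ} (hα : 0 ≤ α) (ht : t ∈ Icc 0 T) : |√(α * t)| ≤ √(α * T) := by
  rw [abs_of_nonneg (sqrt_nonneg _)]
  gcongr
  exact ht.2

lemma exists_expAsymptoticWith_coleHopf {φ : Euc d → ℝ} {C : ℝ} (hα : 0 < α)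
    (hφ : ExpAsymptoticWith C 0 φ) (T : ℝ) :
    ∃ C', ∀ t ∈ Icc 0 T, ExpAsymptoticWith C' 0 (coleHopf d α t φ) := by
  obtain ⟨C₁, hg⟩ := hφ.exists_exp_neg_div α
  have Icc_subset : Icc (exp (-(C / α))) (exp (C / α)) ⊆ Ioi 0 :=
    fun y hy => (exp_pos _).trans_le hy.1
  have one_mem : (1 : ℝ) ∈ Icc (exp (-(C / α))) (exp (C / α)) := by
    have := hφ.nonneg
    simp only [mem_Icc, exp_le_one_iff, one_le_exp_iff, Left.neg_nonpos_iff]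
    constructor <;> positivity
  obtain ⟨C', hC'⟩ := ExpAsymptoticWith.exists_comp (E := Euc d) (h := fun y => -α * log y)
    isOpen_Ioi (contDiffOn_const.mul (contDiffOn_log.mono fun y hy => (mem_Ioi.1 hy).ne'))
    isCompact_Icc (convex_Icc _ _) Icc_subset one_mem
    (C₁ * ∫ z, exp (√(α * T) * ‖z‖) ∂stdGaussian (Euc d))
  refine ⟨C', fun t ht => ?_⟩
  simpa [coleHopf_eq_gaussianAverage hα ht.1] using
    hC' _ (hg.gaussianAverage (abs_sqrt_mul_le hα.le ht))
      (gaussianAverage_mem_Icc hg.contDiff.continuous (hφ.exp_neg_div_mem_Icc hα) _)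

lemma exists_abs_derivWithin_coleHopf_le {φ : Euc d → ℝ} {C : ℝ} (hα : 0 < α)
    (hφ : ExpAsymptoticWith C 0 φ) (T : ℝ) :
    ∃ C', ∀ t ∈ Icc 0 T, ∀ x,
      |derivWithin (fun s => coleHopf d α s φ x) (Ici 0) t| ≤ C' * exp (-‖x‖) := by
  obtain ⟨C₁, hg⟩ := hφ.exists_exp_neg_div α
  refine ⟨α ^ 2 / 2 * (d * C₁ * ∫ z, exp (√(α * T) * ‖z‖) ∂stdGaussian (Euc d)) /
    exp (-(C / α)), fun t ht x => ?_⟩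
  have hC₁ : 0 ≤ C₁ := hg.nonneg
  have average_ge := (gaussianAverage_mem_Icc hg.contDiff.continuous
    (hφ.exp_neg_div_mem_Icc hα) √(α * t) x).1
  have average_laplacian_le := norm_gaussianAverage_le_mul_exp_neg_norm hg.norm_laplacian_le
    (abs_sqrt_mul_le hα.le ht) x
  rw [finrank_euclideanSpace_fin, norm_eq_abs] at average_laplacian_le
  rw [(hasDerivWithinAt_coleHopf hα hφ ht.1 x).derivWithin (uniqueDiffOn_Ici 0 t ht.1), abs_div,
    abs_mul, abs_neg, abs_of_nonneg (by positivity : 0 ≤ α ^ 2 / 2),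
    abs_of_pos ((exp_pos _).trans_le average_ge)]
  calc _ ≤ α ^ 2 / 2 * ((d * C₁ * ∫ z, exp (√(α * T) * ‖z‖) ∂stdGaussian (Euc d)) *
        exp (-‖x‖)) / exp (-(C / α)) := by gcongr
    _ = _ := by ring

theorem statement8_general {φ : Euc d → ℝ} {C₀ : ℝ} (hα : 0 < α)
    (hφ : ExpAsymptoticWith C₀ 0 φ) (T : ℝ) :
    ∃ C > (0 : ℝ), ∀ t ∈ Icc (0 : ℝ) T, ∀ x : Euc d,
      |coleHopf d α t φ x| + |derivWithin (fun s => coleHopf d α s φ x) (Ici 0) t|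
        + |lap d (coleHopf d α t φ) x| + ‖gradient (coleHopf d α t φ) x‖ ^ 2
      ≤ C * exp (-‖x‖) := by
  obtain ⟨C, hV⟩ := exists_expAsymptoticWith_coleHopf hα hφ T
  obtain ⟨C', hV_time⟩ := exists_abs_derivWithin_coleHopf_le hα hφ T
  refine ⟨max 1 (C + C' + d * C + C ^ 2), by positivity, fun t ht x => ?_⟩
  have lap_le : |lap d (coleHopf d α t φ) x| ≤ d * C * exp (-‖x‖) := by
    simpa [lap_eq_laplacian (hV t ht).contDiff] using (hV t ht).norm_laplacian_le x
  have gradient_le : ‖gradient (coleHopf d α t φ) x‖ ^ 2 ≤ C ^ 2 * exp (-‖x‖) :=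
    norm_gradient (coleHopf d α t φ) x ▸ (hV t ht).norm_fderiv_sq_le x
  have value_le : |coleHopf d α t φ x| ≤ C * exp (-‖x‖) := by
    simpa using (hV t ht).norm_sub_le x
  calc _ ≤ C * exp (-‖x‖) + C' * exp (-‖x‖) + d * C * exp (-‖x‖) + C ^ 2 * exp (-‖x‖) := by
        gcongr
        exact hV_time t ht x
    _ = (C + C' + d * C + C ^ 2) * exp (-‖x‖) := by ring
    _ ≤ _ := by gcongr; exact le_max_right _ _

end ColeHopf

/-- for smooth compactly supported `φ` and `T > 0` there is `C > 0` with
`|V_t φ| + |∂_t V_t φ| + |Δ V_t φ| + |∇ V_t φ|² ≤ C e^{-|x|}` on `[0,T] × ℝ^d`. -/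
theorem statement8 (d : ℕ) (hd : 1 ≤ d) (α : ℝ) (hα : 0 < α)
    (φ : Euc d → ℝ) (hφ : ContDiff ℝ (⊤ : ℕ∞) φ) (hsupp : HasCompactSupport φ)
    (T : ℝ) (hT : 0 < T) :
    ∃ C > (0 : ℝ), ∀ t ∈ Set.Icc (0 : ℝ) T, ∀ x : Euc d,
      |coleHopf d α t φ x| + |derivWithin (fun s => coleHopf d α s φ x) (Set.Ici 0) t|
        + |lap d (coleHopf d α t φ) x| + ‖gradient (coleHopf d α t φ) x‖ ^ 2
      ≤ C * Real.exp (-‖x‖) :=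
  let ⟨_, hφ_decay⟩ := ExpAsymptoticWith.exists_of_hasCompactSupport (hφ.of_le (by norm_cast)) hsupp
  statement8_general hα hφ_decay T
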